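/- Let (H,𝓗) and (U,𝓤) be measurable spaces, let Φ: H×U → H be (𝓗⊗𝓤)/𝓗-measurable, let (Ω,𝓕,P) be a probability space, let N ∈ ℕ = {1,2,3,...}, c ∈ (0,1], α, θ ∈ (1,∞), let Z_1,...,Z_N : Ω → U be i.i.d. random variables, let Y_0, Y_1, ..., Y_N : Ω → H be random variables satisfying Y_n = Φ(Y_{n−1}, Z_n) for all n ∈ {1,...,N}, assume that σ(Y_0) and σ(Z_1,...,Z_N) are independent, and let 𝒱 : H → [0,∞) be 𝓗/Borel-measurable. Then E[𝒱(Y_N)] ≥ θ^{(α^N)} · P( 𝒱(Y_0) ≥ c^{1/(1−α)}·θ ) · [ Π_{n=1}^{N} inf( { P( 𝒱(Φ(v,Z_1)) ≥ c·𝒱(v)^α ) : v ∈ H with 𝒱(v) ≥ θ^{(α^{n−1})} } ∪ {1} ) ] (both sides take values in [0,∞]). -/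

import Mathlib

open MeasureTheory ProbabilityTheory
open scoped ENNReal

/-!
Let `κ = c ^ (1 / (1 - α)) ≥ 1` be the fixed point of `x ↦ c * x ^ α`. If `𝒱(Y_{n-1}) ≥ κ t`, then
the event `𝒱(Y_n) ≥ c 𝒱(Y_{n-1})^α` forces `𝒱(Y_n) ≥ κ t ^ α`. Since `Z_n` is independent of
`Y_{n-1}`, Fubini's theorem shows that passing from the level `κ θ ^ (α ^ (n - 1))` to the level
`κ θ ^ (α ^ n)` multiplies the probability by at least the `n`-th factor of the product. After `N`
steps, Markov's inequality and `κ ≥ 1` turn the probability into a lower bound for the expectation.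
-/

lemma mul_prod_Icc_le_of_forall_mul_le {M : Type*} [CommMonoid M] [Preorder M] [MulRightMono M]
    {a p : ℕ → M} {N : ℕ} (h : ∀ n, 1 ≤ n → n ≤ N → a (n - 1) * p n ≤ a n) :
    a 0 * ∏ n ∈ Finset.Icc 1 N, p n ≤ a N := by
  induction N with
  | zero => simp
  | succ N ih =>
    rw [Finset.prod_Icc_succ_top (by omega), ← mul_assoc]
    calc a 0 * (∏ n ∈ Finset.Icc 1 N, p n) * p (N + 1)
        ≤ a N * p (N + 1) := mul_le_mul_left (ih fun n hn hnN => h n hn (by omega)) _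
      _ ≤ a (N + 1) := h (N + 1) (by omega) le_rfl

section Threshold

variable {c α : ℝ}

lemma one_le_rpow_one_div_one_sub (hc0 : 0 < c) (hc1 : c ≤ 1) (hα : 1 < α) :
    1 ≤ c ^ (1 / (1 - α)) :=
  Real.one_le_rpow_of_pos_of_le_one_of_nonpos hc0 hc1
    (one_div_nonpos.mpr (sub_nonpos.mpr hα.le))

lemma mul_rpow_one_div_one_sub_rpow (hc : 0 < c) (hα : α ≠ 1) :
    c * (c ^ (1 / (1 - α))) ^ α = c ^ (1 / (1 - α)) := by
  have hα' : 1 - α ≠ 0 := sub_ne_zero.mpr hα.symm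
  have hexp : 1 + 1 / (1 - α) * α = 1 / (1 - α) := by field_simp; ring
  rw [← Real.rpow_mul hc.le, ← Real.rpow_one_add' hc.le (by rw [hexp]; positivity), hexp]

lemma rpow_one_div_one_sub_mul_rpow_le {t x : ℝ} (hc : 0 < c) (hα0 : 0 ≤ α) (hα1 : α ≠ 1)
    (ht : 0 ≤ t) (hx : c ^ (1 / (1 - α)) * t ≤ x) :
    c ^ (1 / (1 - α)) * t ^ α ≤ c * x ^ α := by
  calc c ^ (1 / (1 - α)) * t ^ α = c * (c ^ (1 / (1 - α)) * t) ^ α := by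
        rw [Real.mul_rpow (by positivity) ht, ← mul_assoc, mul_rpow_one_div_one_sub_rpow hc hα1]
    _ ≤ c * x ^ α := by gcongr

end Threshold

section Independence

lemma sup_eq_generateFrom_image2_inter {Ω : Type*} (m₁ m₂ : MeasurableSpace Ω) :
    m₁ ⊔ m₂ = MeasurableSpace.generateFrom
      (Set.image2 (· ∩ ·) {s | MeasurableSet[m₁] s} {s | MeasurableSet[m₂] s}) := by
  refine le_antisymm (sup_le (fun s hs => ?_) (fun s hs => ?_))
    (MeasurableSpace.generateFrom_le ?_)
  · exact MeasurableSpace.measurableSet_generateFrom ⟨s, hs, Set.univ, .univ, Set.inter_univ s⟩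
  · exact MeasurableSpace.measurableSet_generateFrom ⟨Set.univ, .univ, s, hs, Set.univ_inter s⟩
  · rintro _ ⟨s, hs, t, ht, rfl⟩
    exact MeasurableSet.inter ((le_sup_left : m₁ ≤ m₁ ⊔ m₂) s hs)
      ((le_sup_right : m₂ ≤ m₁ ⊔ m₂) t ht)

lemma isPiSystem_image2_inter {Ω : Type*} {S T : Set (Set Ω)} (hS : IsPiSystem S)
    (hT : IsPiSystem T) : IsPiSystem (Set.image2 (· ∩ ·) S T) := by
  rintro _ ⟨s, hs, t, ht, rfl⟩ _ ⟨s', hs', t', ht', rfl⟩ hne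
  dsimp only at hne ⊢
  rw [Set.inter_inter_inter_comm] at hne ⊢
  exact ⟨_, hS s hs s' hs' hne.left, _, hT t ht t' ht' hne.right, rfl⟩

variable {Ω : Type*} [mΩ : MeasurableSpace Ω] {P : Measure Ω}

lemma indep_sup_left_of_indep_sup_right [IsZeroOrProbabilityMeasure P]
    {m₁ m₂ m₃ : MeasurableSpace Ω} (hm₁ : m₁ ≤ mΩ) (hm₂ : m₂ ≤ mΩ) (hm₃ : m₃ ≤ mΩ)
    (h₁ : Indep m₁ (m₂ ⊔ m₃) P) (h₂ : Indep m₂ m₃ P) : Indep (m₁ ⊔ m₂) m₃ P := by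
  refine IndepSets.indep (sup_le hm₁ hm₂) hm₃
    (isPiSystem_image2_inter (@MeasurableSpace.isPiSystem_measurableSet Ω m₁)
      (@MeasurableSpace.isPiSystem_measurableSet Ω m₂))
    (@MeasurableSpace.isPiSystem_measurableSet Ω m₃) (sup_eq_generateFrom_image2_inter m₁ m₂)
    (@MeasurableSpace.generateFrom_measurableSet Ω m₃).symm ((IndepSets_iff _ _ _).mpr ?_)
  rintro _ u ⟨s, hs, t, ht, rfl⟩ hu
  rw [Indep_iff] at h₁ h₂
  have ht' : MeasurableSet[m₂ ⊔ m₃] t := (le_sup_left : m₂ ≤ m₂ ⊔ m₃) t ht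
  have hu' : MeasurableSet[m₂ ⊔ m₃] u := (le_sup_right : m₃ ≤ m₂ ⊔ m₃) u hu
  calc P (s ∩ t ∩ u) = P s * P (t ∩ u) := by
        rw [Set.inter_assoc, h₁ s (t ∩ u) hs (ht'.inter hu')]
    _ = P (s ∩ t) * P u := by rw [h₂ t u ht hu, h₁ s t hs ht', mul_assoc]

lemma indep_biSup_of_notMem {ι : Type*} {m : ι → MeasurableSpace Ω} {s t : Finset ι} {i : ι}
    (hm : ∀ j ∈ s, m j ≤ mΩ) (h : iIndep (fun j : s => m j) P) (hts : t ⊆ s) (his : i ∈ s)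
    (hit : i ∉ t) : Indep (⨆ j ∈ t, m j) (m i) P := by
  have hdisj : Disjoint {j : s | (j : ι) ∈ t} {⟨i, his⟩} := Set.disjoint_singleton_right.mpr hit
  have hindep : Indep (⨆ j ∈ {j : s | (j : ι) ∈ t}, m j) (m i) P := by
    simpa only [iSup_singleton] using
      indep_iSup_of_disjoint (m := fun j : s => m j) (fun j => hm j j.2) h hdisj
  refine indep_of_indep_of_le_left hindep (iSup₂_le fun j hj => ?_)
  exact le_biSup (fun k : s => m k) (i := ⟨j, hts hj⟩) hj

lemma measure_preimage_mul_le_of_indepFun {H U : Type*} [MeasurableSpace H] [MeasurableSpace U]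
    [IsFiniteMeasure P] {X : Ω → H} {Z : Ω → U} (hX : AEMeasurable X P) (hZ : AEMeasurable Z P)
    (hXZ : IndepFun X Z P) {A : Set H} {B : Set (H × U)} (hB : MeasurableSet B) {p : ℝ≥0∞}
    (hp : ∀ v ∈ A, p ≤ P {ω | (v, Z ω) ∈ B}) :
    P (X ⁻¹' A) * p ≤ P {ω | (X ω, Z ω) ∈ B} := by
  have hsection : ∀ v, P {ω | (v, Z ω) ∈ B} = P.map Z (Prod.mk v ⁻¹' B) := fun v =>
    (Measure.map_apply_of_aemeasurable hZ (measurable_prodMk_left hB)).symm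
  calc P (X ⁻¹' A) * p ≤ P.map X A * p := by gcongr; exact Measure.le_map_apply hX A
    _ = ∫⁻ _ in A, p ∂(P.map X) := by rw [setLIntegral_const, mul_comm]
    _ ≤ ∫⁻ v in A, P.map Z (Prod.mk v ⁻¹' B) ∂(P.map X) :=
        setLIntegral_mono (measurable_measure_prodMk_left hB) fun v hv =>
          (hp v hv).trans_eq (hsection v)
    _ ≤ ∫⁻ v, P.map Z (Prod.mk v ⁻¹' B) ∂(P.map X) := setLIntegral_le_lintegral _ _
    _ = P.map (fun ω => (X ω, Z ω)) B := by
        rw [hXZ.map_prod_eq_prod_map_map hX hZ, Measure.prod_apply hB]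
    _ = P {ω | (X ω, Z ω) ∈ B} := Measure.map_apply_of_aemeasurable (hX.prodMk hZ) hB

end Independence

section Recurrence

variable {H U Ω : Type*} [mH : MeasurableSpace H] [mU : MeasurableSpace U]
  {Φ : H → U → H} {Y : ℕ → Ω → H} {Z : ℕ → Ω → U} {N : ℕ}

lemma measurable_of_recurrence {m : ℕ → MeasurableSpace Ω} (hm : Monotone m)
    (hΦ : Measurable (Function.uncurry Φ)) (hY0 : Measurable[m 0] (Y 0))
    (hZ : ∀ n, 1 ≤ n → n ≤ N → Measurable[m n] (Z n))
    (hY : ∀ n, 1 ≤ n → n ≤ N → ∀ ω, Y n ω = Φ (Y (n - 1) ω) (Z n ω)) {n : ℕ} (hn : n ≤ N) :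
    Measurable[m n] (Y n) := by
  induction n with
  | zero => exact hY0
  | succ n ih =>
    rw [show Y (n + 1) = fun ω => Function.uncurry Φ (Y n ω, Z (n + 1) ω) from
      funext (hY (n + 1) (by omega) hn)]
    exact hΦ.comp (((ih (by omega)).mono (hm n.le_succ) le_rfl).prodMk (hZ _ (by omega) hn))

lemma indepFun_of_recurrence [mΩ : MeasurableSpace Ω] {P : Measure Ω}
    [IsZeroOrProbabilityMeasure P] (hΦ : Measurable (Function.uncurry Φ))
    (hZmeas : ∀ n, 1 ≤ n → n ≤ N → Measurable (Z n))
    (hZindep : iIndepFun (fun n : Finset.Icc 1 N => Z n) P) (hY0 : Measurable (Y 0))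
    (hY : ∀ n, 1 ≤ n → n ≤ N → ∀ ω, Y n ω = Φ (Y (n - 1) ω) (Z n ω))
    (hYZ : Indep (mH.comap (Y 0)) (⨆ n ∈ Finset.Icc 1 N, mU.comap (Z n)) P)
    {n : ℕ} (hn : 1 ≤ n) (hnN : n ≤ N) : IndepFun (Y (n - 1)) (Z n) P := by
  have hZle : ∀ i ∈ Finset.Icc 1 N, mU.comap (Z i) ≤ mΩ := fun i hi =>
    (hZmeas i (Finset.mem_Icc.mp hi).1 (Finset.mem_Icc.mp hi).2).comap_le
  have hn_mem : n ∈ Finset.Icc 1 N := Finset.mem_Icc.mpr ⟨hn, hnN⟩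
  have hsub : Finset.Icc 1 (n - 1) ⊆ Finset.Icc 1 N := Finset.Icc_subset_Icc_right (by omega)
  let past : ℕ → MeasurableSpace Ω := fun k =>
    mH.comap (Y 0) ⊔ ⨆ i ∈ Finset.Icc 1 k, mU.comap (Z i)
  have hpast_mono : Monotone past := fun j k hjk =>
    sup_le_sup_left (biSup_mono fun i hi => Finset.Icc_subset_Icc_right hjk hi) _
  have hpast_indep : Indep (past (n - 1)) (mU.comap (Z n)) P := by
    refine indep_sup_left_of_indep_sup_right hY0.comap_le
      (iSup₂_le fun i hi => hZle i (hsub hi)) (hZle n hn_mem) ?_ ?_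
    · exact indep_of_indep_of_le_right hYZ
        (sup_le (biSup_mono fun i hi => hsub hi)
          (le_biSup (fun i => mU.comap (Z i)) hn_mem))
    · exact indep_biSup_of_notMem hZle hZindep hsub hn_mem (by rw [Finset.mem_Icc]; omega)
  have hYpast : Measurable[past (n - 1)] (Y (n - 1)) :=
    measurable_of_recurrence (N := n - 1) hpast_mono hΦ
      ((comap_measurable (Y 0)).mono le_sup_left le_rfl)
      (fun i hi _ => (comap_measurable (Z i)).mono
        (le_sup_of_le_right (le_biSup (fun i => mU.comap (Z i)) (Finset.mem_Icc.mpr ⟨hi, le_rfl⟩)))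
        le_rfl)
      (fun i hi hin => hY i hi (by omega)) le_rfl
  exact (IndepFun_iff_Indep _ _ _).mpr (indep_of_indep_of_le_left hpast_indep hYpast.comap_le)

end Recurrence

lemma measure_threshold_mul_le_measure_threshold_rpow {H U Ω : Type*} [MeasurableSpace H]
    [MeasurableSpace U] [MeasurableSpace Ω] {P : Measure Ω} [IsFiniteMeasure P] {Φ : H → U → H}
    (hΦ : Measurable (Function.uncurry Φ)) {c α t : ℝ} (hc0 : 0 < c) (hc1 : c ≤ 1) (hα : 1 < α)
    (ht : 0 ≤ t) {X : Ω → H} {Z : Ω → U} (hX : AEMeasurable X P) (hZ : AEMeasurable Z P)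
    (hXZ : IndepFun X Z P) {V : H → ℝ} (hV : Measurable V) {p : ℝ≥0∞}
    (hp : ∀ v, t ≤ V v → p ≤ P {ω | c * V v ^ α ≤ V (Φ v (Z ω))}) :
    P {ω | c ^ (1 / (1 - α)) * t ≤ V (X ω)} * p ≤
      P {ω | c ^ (1 / (1 - α)) * t ^ α ≤ V (Φ (X ω) (Z ω))} := by
  refine measure_preimage_mul_le_of_indepFun hX hZ hXZ
    (A := {v | c ^ (1 / (1 - α)) * t ≤ V v})
    (B := {x | c ^ (1 / (1 - α)) * t ^ α ≤ V (Function.uncurry Φ x)})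
    (measurableSet_le measurable_const (hV.comp hΦ)) fun v hv => ?_
  have htv : t ≤ V v :=
    (le_mul_of_one_le_left ht (one_le_rpow_one_div_one_sub hc0 hc1 hα)).trans hv
  exact (hp v htv).trans (measure_mono fun ω hω =>
    (rpow_one_div_one_sub_mul_rpow_le hc0 (by linarith) hα.ne' ht hv).trans hω)

theorem abstract_divergence_bound_no_set_general
    {H U Ω : Type*} [MeasurableSpace H] [MeasurableSpace U] [MeasurableSpace Ω]
    (P : Measure Ω) [IsFiniteMeasure P]
    (Φ : H → U → H) (hΦ : Measurable (Function.uncurry Φ)) (N : ℕ)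
    (c α θ : ℝ) (hc0 : 0 < c) (hc1 : c ≤ 1) (hα : 1 < α) (hθ : 0 < θ)
    (Z : ℕ → Ω → U) (hZ : ∀ n, 1 ≤ n → n ≤ N → Measurable (Z n))
    (Y : ℕ → Ω → H) (hY0 : Measurable (Y 0))
    (hY : ∀ n, 1 ≤ n → n ≤ N → ∀ ω, Y n ω = Φ (Y (n - 1) ω) (Z n ω))
    (hYZ : ∀ n, 1 ≤ n → n ≤ N → IndepFun (Y (n - 1)) (Z n) P)
    (V : H → ℝ) (hV : Measurable V) (p : ℕ → ℝ≥0∞)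
    (hp : ∀ n, 1 ≤ n → n ≤ N → ∀ v, θ ^ (α ^ (n - 1)) ≤ V v →
      p n ≤ P {ω | c * V v ^ α ≤ V (Φ v (Z n ω))}) :
    ENNReal.ofReal (θ ^ (α ^ N)) * P {ω | c ^ (1 / (1 - α)) * θ ≤ V (Y 0 ω)} *
        ∏ n ∈ Finset.Icc 1 N, p n ≤
      ∫⁻ ω, ENNReal.ofReal (V (Y N ω)) ∂P := by
  have hYmeas : ∀ n ≤ N, Measurable (Y n) := fun n hn =>
    measurable_of_recurrence (m := fun _ => inferInstance) monotone_const hΦ hY0 hZ hY hn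
  have hstep : ∀ n, 1 ≤ n → n ≤ N →
      P {ω | c ^ (1 / (1 - α)) * θ ^ (α ^ (n - 1)) ≤ V (Y (n - 1) ω)} * p n ≤
        P {ω | c ^ (1 / (1 - α)) * θ ^ (α ^ n) ≤ V (Y n ω)} := by
    intro n hn hnN
    have hpow : θ ^ (α ^ n) = (θ ^ (α ^ (n - 1))) ^ α := by
      rw [← Real.rpow_mul hθ.le, ← pow_succ, Nat.sub_add_cancel hn]
    simp only [hpow, hY n hn hnN]
    exact measure_threshold_mul_le_measure_threshold_rpow hΦ hc0 hc1 hα (by positivity)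
      (hYmeas (n - 1) (by omega)).aemeasurable (hZ n hn hnN).aemeasurable (hYZ n hn hnN) hV
      (hp n hn hnN)
  have hchain : P {ω | c ^ (1 / (1 - α)) * θ ≤ V (Y 0 ω)} * ∏ n ∈ Finset.Icc 1 N, p n ≤
      P {ω | c ^ (1 / (1 - α)) * θ ^ (α ^ N) ≤ V (Y N ω)} := by
    simpa only [pow_zero, Real.rpow_one] using mul_prod_Icc_le_of_forall_mul_le
      (a := fun n => P {ω | c ^ (1 / (1 - α)) * θ ^ (α ^ n) ≤ V (Y n ω)}) hstep
  have hdrop : {ω | c ^ (1 / (1 - α)) * θ ^ (α ^ N) ≤ V (Y N ω)} ⊆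
      {ω | ENNReal.ofReal (θ ^ (α ^ N)) ≤ ENNReal.ofReal (V (Y N ω))} := fun ω hω =>
    ENNReal.ofReal_le_ofReal ((le_mul_of_one_le_left (by positivity)
      (one_le_rpow_one_div_one_sub hc0 hc1 hα)).trans hω)
  rw [mul_assoc]
  calc _ ≤ ENNReal.ofReal (θ ^ (α ^ N)) *
        P {ω | ENNReal.ofReal (θ ^ (α ^ N)) ≤ ENNReal.ofReal (V (Y N ω))} := by
        gcongr
        exact hchain.trans (measure_mono hdrop)
    _ ≤ ∫⁻ ω, ENNReal.ofReal (V (Y N ω)) ∂P :=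
        mul_meas_ge_le_lintegral (hV.comp (hYmeas N le_rfl)).ennreal_ofReal _

/-- Corollary of the main abstract lower bound (Corollary 2.9):
`E[𝒱(Y_N)] ≥ θ^{α^N} · P(𝒱(Y_0) ≥ c^{1/(1−α)}·θ) ·
Π_{n=1}^{N} inf({P(𝒱(Φ(v,Z_1)) ≥ c·𝒱(v)^α) : v ∈ H, 𝒱(v) ≥ θ^{α^{n−1}}} ∪ {1})`. -/
theorem abstract_divergence_bound_no_set
    {H U Ω : Type*} [mH : MeasurableSpace H] [mU : MeasurableSpace U] [mΩ : MeasurableSpace Ω]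
    (P : Measure Ω) [IsProbabilityMeasure P]
    (Φ : H → U → H) (hΦ : Measurable (Function.uncurry Φ))
    (N : ℕ) (hN : 1 ≤ N)
    (c α θ : ℝ) (hc0 : 0 < c) (hc1 : c ≤ 1) (hα : 1 < α) (hθ : 1 < θ)
    (Z : ℕ → Ω → U) (hZmeas : ∀ n, 1 ≤ n → n ≤ N → Measurable (Z n))
    (hZindep : iIndepFun (m := fun _ => mU) (fun n : (Finset.Icc 1 N) => Z (n : ℕ)) P)
    (hZid : ∀ n, 1 ≤ n → n ≤ N → P.map (Z n) = P.map (Z 1))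
    (Y : ℕ → Ω → H) (hY0meas : Measurable (Y 0))
    (hYrec : ∀ n, 1 ≤ n → n ≤ N → ∀ ω, Y n ω = Φ (Y (n - 1) ω) (Z n ω))
    (hYZindep : Indep (MeasurableSpace.comap (Y 0) mH)
        (⨆ n ∈ Finset.Icc 1 N, MeasurableSpace.comap (Z n) mU) P)
    (V : H → ℝ) (hV : Measurable V) (hVpos : ∀ x, 0 ≤ V x) :
    ENNReal.ofReal (θ ^ (α ^ N)) *
        P {ω | c ^ (1 / (1 - α)) * θ ≤ V (Y 0 ω)} *
        ∏ n ∈ Finset.Icc 1 N,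
          sInf (((fun v => P {ω | c * V v ^ α ≤ V (Φ v (Z 1 ω))}) ''
            {v | θ ^ (α ^ (n - 1)) ≤ V v}) ∪ {1}) ≤
      ∫⁻ ω, ENNReal.ofReal (V (Y N ω)) ∂P := by
  refine abstract_divergence_bound_no_set_general P Φ hΦ N c α θ hc0 hc1 hα (by linarith) Z hZmeas
    Y hY0meas hYrec (fun n hn hnN => indepFun_of_recurrence hΦ hZmeas hZindep hY0meas hYrec hYZindep
      hn hnN) V hV _ fun n hn hnN v hv => sInf_le (.inl ⟨v, hv, ?_⟩)
  have hident : IdentDistrib (Z 1) (Z n) P P :=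
    ⟨(hZmeas 1 le_rfl hN).aemeasurable, (hZmeas n hn hnN).aemeasurable, (hZid n hn hnN).symm⟩
  exact hident.measure_mem_eq (s := {u | c * V v ^ α ≤ V (Φ v u)})
    (measurableSet_le measurable_const (hV.comp (hΦ.comp measurable_prodMk_left)))
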